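/- arXiv:2202.09024 — 3 statements merged into one kernel-verified Lean document; each statement's English description precedes it below -/
import Mathlib

section
/- Let n ≥ 1, let w_0 be an integer, let w_1 and w_2 be non-zero integers, and let T ⊆ {1,…,n} with |T| = t ≤ n/2. Define f : {-1,1}^n → {-1,1} by f(x) = sgn(w_0 + w_1·Σ_{u∈T} x_u + w_2·Σ_{v∉T} x_v). If w_0 ≥ 0, let S_0 = {(i,j) : 0 ≤ i ≤ t, 0 ≤ j ≤ n−t, and −w_0 ≤ w_1(2i−t) + w_2(2j−(n−t)) ≤ w_0}; if w_0 < 0, let S_0 = {(i,j) : 0 ≤ i ≤ t, 0 ≤ j ≤ n−t, and w_0 < w_1(2i−t) + w_2(2j−(n−t)) < −w_0}. Then W^(0)[f] = 2^{-2n} · [Σ_{(i,j)∈S_0} C(t,i)·C(n−t,j)]². -/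
open Finset

namespace BKS

/-- sign function: 1 if z ≥ 0, -1 otherwise. -/
noncomputable def sgn (z : ℝ) : ℝ := if 0 ≤ z then 1 else -1

/-- encode Bool as the ±1 value of a bit. -/
def chi (b : Bool) : ℝ := if b then 1 else -1

/-- Fourier coefficient of f at S. -/
noncomputable def fourierCoeff {n : ℕ} (f : (Fin n → Bool) → ℝ) (S : Finset (Fin n)) : ℝ :=
  (1 / 2 ^ n : ℝ) * ∑ x : Fin n → Bool, f x * ∏ i ∈ S, chi (x i)

/-- Fourier weight of f at level k: W^(k)[f]. -/
noncomputable def fourierWeight {n : ℕ} (k : ℕ) (f : (Fin n → Bool) → ℝ) : ℝ :=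
  ∑ S ∈ Finset.univ.filter (fun S : Finset (Fin n) => S.card = k), (fourierCoeff f S) ^ 2

/-- Noise stability of f at ρ. -/
noncomputable def noiseStab {n : ℕ} (ρ : ℝ) (f : (Fin n → Bool) → ℝ) : ℝ :=
  ∑ k ∈ Finset.range (n + 1), ρ ^ k * fourierWeight k f

/-- Majority function on n bits. -/
noncomputable def Maj (n : ℕ) : (Fin n → Bool) → ℝ := fun x => sgn (∑ i, chi (x i))

/-- The function g_n(x) = sgn(2(x_1 + ⋯ + x_{n-3}) + x_{n-2} + x_{n-1} + x_n). -/
noncomputable def gfun (n : ℕ) : (Fin n → Bool) → ℝ :=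
  fun x => sgn (∑ i : Fin n, (if (i : ℕ) < n - 3 then (2 : ℝ) else 1) * chi (x i))

/-- f is a linear threshold function. -/
def IsLTF {n : ℕ} (f : (Fin n → Bool) → ℝ) : Prop :=
  ∃ (w0 : ℝ) (w : Fin n → ℝ), ∀ x, f x = sgn (w0 + ∑ i, w i * chi (x i))

/-! A global sign flip of `x` negates the linear form `L`, so twice the sum of `f` is the sum over
`x` of `sgn (w₀ + L x) + sgn (w₀ - L x)`. The two terms cancel unless `L x` lies in the window that
defines `S₀`, and there both equal `sgn w₀`. Hence the sum of `f` is, up to sign, the number of `x`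
with `L x` in the window. Since `L x` depends only on how many coordinates inside and outside `T`
are `+1`, this number is a sum of products of binomial coefficients. -/

/-- The set of `z` for which `sgn (w + z)` and `sgn (w - z)` agree, given by its endpoints so that
it matches the case distinction on `w₀` in the theorem. -/
def sgnWindow (w : ℝ) : Set ℝ := if 0 ≤ w then Set.Icc (-w) w else Set.Ioo w (-w)

lemma intCast_mem_sgnWindow {w z : ℤ} :
    (z : ℝ) ∈ sgnWindow w ↔ if 0 ≤ w then -w ≤ z ∧ z ≤ w else w < z ∧ z < -w := by
  simp only [sgnWindow, Int.cast_nonneg_iff]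
  split_ifs
  · rw [Set.mem_Icc]
    norm_cast
  · rw [Set.mem_Ioo]
    norm_cast

lemma sgn_sq (z : ℝ) : sgn z ^ 2 = 1 := by
  unfold sgn
  split_ifs <;> norm_num

open Classical in
lemma sgn_add_add_sgn_sub (w z : ℝ) :
    sgn (w + z) + sgn (w - z) = 2 * sgn w * if z ∈ sgnWindow w then 1 else 0 := by
  unfold sgn sgnWindow
  split_ifs <;> simp_all only [Set.mem_Icc, Set.mem_Ioo] <;> grind

open Classical in
lemma sum_sgn_add_of_odd {α : Type*} [Fintype α] {e : α → α} (he : e.Involutive) {L : α → ℝ}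
    (hL : ∀ x, L (e x) = -L x) (w : ℝ) :
    ∑ x, sgn (w + L x) = sgn w * #{x | L x ∈ sgnWindow w} := by
  have reflection : ∑ x, sgn (w - L x) = ∑ x, sgn (w + L x) := by
    simpa only [Function.Involutive.coe_toPerm, hL, ← sub_eq_add_neg] using
      Equiv.sum_comp he.toPerm fun x ↦ sgn (w + L x)
  have pairing : ∑ x, sgn (w + L x) + ∑ x, sgn (w - L x) =
      2 * sgn w * #{x | L x ∈ sgnWindow w} := by
    simp only [← sum_add_distrib, sgn_add_add_sgn_sub, ← mul_sum, sum_boole]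
  linarith

lemma fourierWeight_zero {n : ℕ} (f : (Fin n → Bool) → ℝ) :
    fourierWeight 0 f = 1 / 2 ^ (2 * n) * (∑ x, f x) ^ 2 := by
  have weight_eq_sq_coeff : fourierWeight 0 f = fourierCoeff f ∅ ^ 2 := by
    simp [fourierWeight, filter_eq']
  simp only [weight_eq_sq_coeff, fourierCoeff, prod_empty, mul_one, mul_pow, one_div_pow,
    ← pow_mul, mul_comm n 2]

open Classical in
lemma fourierWeight_zero_sgn_add_of_odd {n : ℕ} {L : (Fin n → Bool) → ℝ}
    (hL : ∀ x, L (fun u ↦ !x u) = -L x) (w : ℝ) :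
    fourierWeight 0 (fun x ↦ sgn (w + L x)) =
      1 / 2 ^ (2 * n) * (#{x | L x ∈ sgnWindow w} : ℝ) ^ 2 := by
  have flip_involutive : Function.Involutive fun (x : Fin n → Bool) u ↦ !x u := fun x ↦ by
    simp only [Bool.not_not]
  rw [fourierWeight_zero, sum_sgn_add_of_odd flip_involutive hL, mul_pow, sgn_sq, one_mul]

lemma chi_not (b : Bool) : chi (!b) = -chi b := by
  cases b <;> simp [chi]

section Cube

variable {ι : Type*}

lemma sum_chi (s : Finset ι) (x : ι → Bool) :
    ∑ u ∈ s, chi (x u) = 2 * (#{u ∈ s | x u} : ℝ) - #s := by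
  have chi_eq (b : Bool) : chi b = 2 * (if b then 1 else 0) - 1 := by
    cases b <;> norm_num [chi]
  simp only [chi_eq, sum_sub_distrib, ← mul_sum, sum_boole, sum_const, nsmul_eq_mul, mul_one]

variable [Fintype ι] [DecidableEq ι] {M : Type*} [AddCommMonoid M]

lemma sum_bool_fun_filter_filter_compl (T : Finset ι) (g : Finset ι → Finset ι → M) :
    ∑ x : ι → Bool, g {u ∈ T | x u} {v ∈ Tᶜ | x v} =
      ∑ A ∈ T.powerset, ∑ B ∈ Tᶜ.powerset, g A B := by
  rw [← sum_product']
  refine sum_bij' (fun x _ ↦ ({u ∈ T | x u}, {v ∈ Tᶜ | x v}))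
    (fun p _ u ↦ decide (u ∈ p.1 ∪ p.2)) ?_ ?_ ?_ ?_ ?_
  · simp
  · simp
  · intro x _
    ext u
    grind [mem_compl]
  · rintro ⟨A, B⟩ hAB
    ext u <;> grind [mem_compl]
  · simp

lemma sum_bool_fun_card_filter_card_filter_compl (T : Finset ι) (g : ℕ → ℕ → M) :
    ∑ x : ι → Bool, g #{u ∈ T | x u} #{v ∈ Tᶜ | x v} =
      ∑ p ∈ range (#T + 1) ×ˢ range (#Tᶜ + 1),
        ((#T).choose p.1 * (#Tᶜ).choose p.2) • g p.1 p.2 := by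
  rw [sum_bool_fun_filter_filter_compl T fun A B ↦ g #A #B]
  simp only [sum_powerset_apply_card (g _)]
  rw [sum_powerset_apply_card fun i ↦ ∑ j ∈ range (#Tᶜ + 1), (#Tᶜ).choose j • g i j]
  simp only [sum_product, smul_sum, mul_smul]

lemma card_bool_fun_card_filter_card_filter_compl (T : Finset ι) (P : ℕ → ℕ → Prop)
    [∀ i j, Decidable (P i j)] :
    #{x : ι → Bool | P #{u ∈ T | x u} #{v ∈ Tᶜ | x v}} =
      ∑ p ∈ range (#T + 1) ×ˢ range (#Tᶜ + 1) with P p.1 p.2,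
        (#T).choose p.1 * (#Tᶜ).choose p.2 := by
  rw [card_filter, sum_bool_fun_card_filter_card_filter_compl T fun i j ↦ if P i j then 1 else 0,
    sum_filter]
  simp only [smul_eq_mul, mul_ite, mul_one, mul_zero]

end Cube

open Classical in
theorem stmt1_general {n : ℕ} (w₀ w₁ w₂ : ℝ) (T : Finset (Fin n)) (f : (Fin n → Bool) → ℝ)
    (hf : ∀ x, f x = sgn (w₀ + w₁ * ∑ u ∈ T, chi (x u) + w₂ * ∑ v ∈ Tᶜ, chi (x v))) :
    fourierWeight 0 f = 1 / 2 ^ (2 * n) *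
      (∑ p ∈ range (#T + 1) ×ˢ range (n - #T + 1) with
        w₁ * (2 * (p.1 : ℝ) - #T) + w₂ * (2 * (p.2 : ℝ) - (n - #T)) ∈ sgnWindow w₀,
        ((#T).choose p.1 : ℝ) * ((n - #T).choose p.2 : ℝ)) ^ 2 := by
  let L (x : Fin n → Bool) : ℝ := w₁ * ∑ u ∈ T, chi (x u) + w₂ * ∑ v ∈ Tᶜ, chi (x v)
  let ℓ (i j : ℕ) : ℝ := w₁ * (2 * i - #T) + w₂ * (2 * j - (n - #T))
  have card_compl_T : #Tᶜ = n - #T := by rw [card_compl, Fintype.card_fin]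
  have L_flip (x : Fin n → Bool) : L (fun u ↦ !x u) = -L x := by
    simp only [L, chi_not, sum_neg_distrib]
    ring
  have L_eq (x : Fin n → Bool) : L x = ℓ #{u ∈ T | x u} #{v ∈ Tᶜ | x v} := by
    simp only [L, ℓ, sum_chi, card_compl_T, Nat.cast_sub (card_finset_fin_le T)]
  have f_eq : f = fun x ↦ sgn (w₀ + L x) := funext fun x ↦ by rw [hf, add_assoc]
  rw [f_eq, fourierWeight_zero_sgn_add_of_odd L_flip]
  simp only [L_eq]
  rw [card_bool_fun_card_filter_card_filter_compl T fun i j ↦ ℓ i j ∈ sgnWindow w₀, card_compl_T]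
  push_cast
  rfl

open Classical in
theorem stmt1 (n : ℕ) (hn : 1 ≤ n) (w0 w1 w2 : ℤ) (hw1 : w1 ≠ 0) (hw2 : w2 ≠ 0)
    (T : Finset (Fin n)) (t : ℕ) (ht : T.card = t) (htn : 2 * t ≤ n)
    (f : (Fin n → Bool) → ℝ)
    (hf : ∀ x, f x = sgn ((w0 : ℝ) + (w1 : ℝ) * ∑ u ∈ T, chi (x u)
      + (w2 : ℝ) * ∑ v ∈ Tᶜ, chi (x v)))
    (S0 : Finset (ℕ × ℕ))
    (hS0 : S0 = (Finset.range (t + 1) ×ˢ Finset.range (n - t + 1)).filter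
      (fun p => if 0 ≤ w0 then
          (-w0 ≤ w1 * (2 * (p.1 : ℤ) - t) + w2 * (2 * (p.2 : ℤ) - ((n : ℤ) - t)) ∧
           w1 * (2 * (p.1 : ℤ) - t) + w2 * (2 * (p.2 : ℤ) - ((n : ℤ) - t)) ≤ w0)
        else
          (w0 < w1 * (2 * (p.1 : ℤ) - t) + w2 * (2 * (p.2 : ℤ) - ((n : ℤ) - t)) ∧
           w1 * (2 * (p.1 : ℤ) - t) + w2 * (2 * (p.2 : ℤ) - ((n : ℤ) - t)) < -w0))) :
    fourierWeight 0 f =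
      (1 / 2 ^ (2 * n) : ℝ) *
        (∑ p ∈ S0, ((t.choose p.1 : ℝ) * ((n - t).choose p.2 : ℝ))) ^ 2 := by
  subst ht hS0
  simp only [← intCast_mem_sgnWindow]
  exact_mod_cast stmt1_general w0 w1 w2 T f hf

end BKS
end

section
/- For every odd n ≥ 3, the ratio W^(1)[g_n] / W^(1)[Maj_n] equals ((n−1)/(n−2))² · ((4n−9)/(4n)). -/
open Finset

namespace BKS

lemma chi_mul_self (b : Bool) : chi b * chi b = 1 := by
  cases b <;> simp [chi]

lemma abs_chi (b : Bool) : |chi b| = 1 := by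
  cases b <;> simp [chi]

lemma chi_eq_two_mul_ite_sub_one (b : Bool) : chi b = 2 * (if b = true then 1 else 0) - 1 := by
  cases b <;> norm_num [chi]

lemma sgn_chi (b : Bool) : sgn (chi b) = chi b := by
  cases b <;> norm_num [sgn, chi]

lemma sgn_neg {z : ℝ} (hz : z ≠ 0) : sgn (-z) = -sgn z := by
  rcases hz.lt_or_gt with h | h
  · simp [sgn, h.le, h.not_ge]
  · simp [sgn, h.le, h.not_ge]

lemma sgn_mul_of_pos {w : ℝ} (hw : 0 < w) (z : ℝ) : sgn (w * z) = sgn z := by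
  simp only [sgn, mul_nonneg_iff_of_pos_left hw]

lemma sgn_add_of_abs_lt_abs {y z : ℝ} (h : |z| < |y|) : sgn (y + z) = sgn y := by
  obtain ⟨hlo, hhi⟩ := abs_lt.mp h
  rcases le_or_gt 0 y with hy | hy
  · rw [abs_of_nonneg hy] at hlo
    simp only [sgn, hy, if_true, if_pos (show 0 ≤ y + z by linarith)]
  · rw [abs_of_neg hy] at hhi
    simp only [sgn, if_neg hy.not_ge, if_neg (show ¬0 ≤ y + z by linarith)]

section SumChi

variable {n : ℕ}

lemma sum_chi_eq (x : Fin n → Bool) : ∑ i, chi (x i) = 2 * (#{i | x i = true} : ℝ) - n := by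
  simp only [chi_eq_two_mul_ite_sub_one, sum_sub_distrib, ← mul_sum, sum_boole]
  simp

lemma abs_sum_chi_le (x : Fin n → Bool) : |∑ i, chi (x i)| ≤ n :=
  (abs_sum_le_sum_abs _ _).trans_eq (by simp [abs_chi])

lemma sum_chi_ne_zero_of_odd (hn : Odd n) (x : Fin n → Bool) : ∑ i, chi (x i) ≠ 0 := by
  intro h
  rw [sum_chi_eq, sub_eq_zero] at h
  have h' : 2 * #{i | x i = true} = n := by exact_mod_cast h
  exact Nat.not_even_iff_odd.mpr hn (h' ▸ even_two_mul _)

lemma two_le_abs_sum_chi {k : ℕ} {x : Fin (2 * k) → Bool} (h : ∑ i, chi (x i) ≠ 0) :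
    2 ≤ |∑ i, chi (x i)| := by
  obtain ⟨z, hz⟩ : ∃ z : ℤ, ∑ i, chi (x i) = 2 * z :=
    ⟨#{i | x i = true} - k, by rw [sum_chi_eq]; push_cast; ring⟩
  have hz0 : z ≠ 0 := by rintro rfl; simp [hz] at h
  have hone : (1 : ℝ) ≤ |(z : ℝ)| := by exact_mod_cast Int.one_le_abs hz0
  rw [hz, abs_mul, abs_two]
  linarith

lemma card_sum_chi_eq_zero (k : ℕ) :
    #{x : Fin (2 * k) → Bool | ∑ i, chi (x i) = 0} = k.centralBinom := by
  have htie (x : Fin (2 * k) → Bool) : ∑ i, chi (x i) = 0 ↔ #{i | x i = true} = k := by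
    rw [sum_chi_eq, sub_eq_zero, ← Nat.cast_inj (R := ℝ)]
    push_cast
    exact mul_right_inj' two_ne_zero
  calc #{x : Fin (2 * k) → Bool | ∑ i, chi (x i) = 0}
      = #(powersetCard k (univ : Finset (Fin (2 * k)))) :=
        card_nbij' (fun x => ({i | x i = true} : Finset _)) (fun S i => decide (i ∈ S))
          (fun x hx => by simpa [htie] using hx) (fun S hS => by simpa [htie] using hS)
          (fun x _ => by simp) (fun S _ => by simp)
    _ = k.centralBinom := by rw [card_powersetCard, card_fin, Nat.centralBinom]

lemma sum_eq_zero_of_map_not {f : (Fin n → Bool) → ℝ} (hf : ∀ x, f (fun i => !x i) = -f x) :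
    ∑ x, f x = 0 := by
  have h : ∑ x, f x = -∑ x, f x := calc
    ∑ x, f x = ∑ x : Fin n → Bool, f (fun i => !x i) :=
      ((Equiv.piCongrRight fun _ : Fin n => Equiv.boolNot).sum_comp f).symm
    _ = -∑ x, f x := by simp only [hf, sum_neg_distrib]
  linarith

lemma sum_chi_apply_eq_zero (i : Fin n) : ∑ x : Fin n → Bool, chi (x i) = 0 :=
  sum_eq_zero_of_map_not fun x => chi_not (x i)

lemma sum_Maj_eq_zero (hn : Odd n) : ∑ x, Maj n x = 0 :=
  sum_eq_zero_of_map_not fun x => by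
    simp only [Maj, chi_not, sum_neg_distrib, sgn_neg (sum_chi_ne_zero_of_odd hn x)]

end SumChi

section FourierCoeff

variable {n : ℕ}

lemma fourierCoeff_singleton (f : (Fin n → Bool) → ℝ) (i : Fin n) :
    fourierCoeff f {i} = (1 / 2 ^ n) * ∑ x, f x * chi (x i) := by
  simp only [fourierCoeff, prod_singleton]

lemma fourierWeight_one (f : (Fin n → Bool) → ℝ) :
    fourierWeight 1 f = ∑ i, fourierCoeff f {i} ^ 2 := by
  rw [fourierWeight, univ_filter_card_eq, powersetCard_one, sum_map]
  rfl

lemma fourierCoeff_map_of_comp_eq {f : (Fin n → Bool) → ℝ} {σ : Equiv.Perm (Fin n)}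
    (hf : ∀ x, f (x ∘ σ) = f x) (S : Finset (Fin n)) :
    fourierCoeff f (S.map σ.toEmbedding) = fourierCoeff f S := by
  have h := (σ.symm.arrowCongr (Equiv.refl Bool)).sum_comp fun x => f x * ∏ i ∈ S, chi (x i)
  rw [fourierCoeff, fourierCoeff, ← h]
  simp [Equiv.arrowCongr, hf]

lemma fourierCoeff_Maj_singleton_eq (i j : Fin n) :
    fourierCoeff (Maj n) {i} = fourierCoeff (Maj n) {j} := by
  have hsymm (x : Fin n → Bool) : Maj n (x ∘ Equiv.swap j i) = Maj n x :=
    congrArg sgn (Equiv.sum_comp (Equiv.swap j i) fun l => chi (x l))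
  simpa using fourierCoeff_map_of_comp_eq hsymm {j}

lemma fourierCoeff_Maj_one (i : Fin 1) : fourierCoeff (Maj 1) {i} = 1 := by
  have hMaj (x : Fin 1 → Bool) : Maj 1 x = chi (x i) := by
    simp [Maj, sgn_chi, Subsingleton.elim i 0]
  simp [fourierCoeff_singleton, hMaj, chi_mul_self]

end FourierCoeff

lemma sum_univ_append {α M : Type*} [Fintype α] [AddCommMonoid M] {m r : ℕ}
    (F : (Fin (m + r) → α) → M) :
    ∑ x, F x = ∑ a : Fin m → α, ∑ b : Fin r → α, F (Fin.append a b) := by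
  rw [← (Fin.appendEquiv m r).sum_comp, Fintype.sum_prod_type]
  rfl

/-- The majority of the first `m` bits, with ties broken by applying `h` to the remaining `r` bits.
It is the common form of `Maj` and `gfun`. -/
noncomputable def tieBreak (m : ℕ) {r : ℕ} (h : (Fin r → Bool) → ℝ) : (Fin (m + r) → Bool) → ℝ :=
  fun x => if ∑ i : Fin m, chi (x (Fin.castAdd r i)) = 0 then h fun j => x (Fin.natAdd m j)
    else sgn (∑ i : Fin m, chi (x (Fin.castAdd r i)))

/-- The probability that `m` independent uniform `±1` bits sum to zero. -/
noncomputable def tieProb (m : ℕ) : ℝ :=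
  #{x : Fin m → Bool | ∑ i, chi (x i) = 0} / 2 ^ m

section TieProb

variable (k : ℕ)

lemma tieProb_two_mul : tieProb (2 * k) = k.centralBinom / 4 ^ k := by
  rw [tieProb, card_sum_chi_eq_zero, pow_mul]
  norm_num

lemma tieProb_two_mul_pos : 0 < tieProb (2 * k) := by
  have := Nat.centralBinom_pos k
  rw [tieProb_two_mul]
  positivity

lemma tieProb_two_mul_succ :
    tieProb (2 * (k + 1)) = tieProb (2 * k) * ((2 * k + 1) / (2 * (k + 1))) := by
  have h : ((k : ℝ) + 1) * (k + 1).centralBinom = 2 * (2 * k + 1) * k.centralBinom := by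
    exact_mod_cast Nat.succ_mul_centralBinom_succ k
  rw [tieProb_two_mul, tieProb_two_mul, pow_succ]
  field_simp
  linear_combination 2 * h

end TieProb

section TieBreak

variable {m r : ℕ} {h : (Fin r → Bool) → ℝ}

lemma tieBreak_append (a : Fin m → Bool) (b : Fin r → Bool) :
    tieBreak m h (Fin.append a b) =
      if ∑ i, chi (a i) = 0 then h b else sgn (∑ i, chi (a i)) := by
  simp only [tieBreak, Fin.append_left, Fin.append_right]

lemma fourierCoeff_tieBreak_natAdd (j : Fin r) :
    fourierCoeff (tieBreak m h) {Fin.natAdd m j} = tieProb m * fourierCoeff h {j} := by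
  have hinner (a : Fin m → Bool) :
      ∑ b, tieBreak m h (Fin.append a b) * chi (b j) =
        if ∑ i, chi (a i) = 0 then ∑ b, h b * chi (b j) else 0 := by
    simp only [tieBreak_append]
    split_ifs
    · rfl
    · rw [← mul_sum, sum_chi_apply_eq_zero, mul_zero]
  rw [fourierCoeff_singleton, fourierCoeff_singleton, sum_univ_append]
  simp only [Fin.append_right, hinner, ← sum_filter, sum_const, nsmul_eq_mul, tieProb, pow_add]
  ring

lemma fourierCoeff_tieBreak_castAdd (hh : ∑ b, h b = 0) (i : Fin m) :
    fourierCoeff (tieBreak m h) {Fin.castAdd r i} =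
      (1 / 2 ^ m) * ∑ a : Fin m → Bool,
        (if ∑ l, chi (a l) = 0 then 0 else sgn (∑ l, chi (a l))) * chi (a i) := by
  have hinner (a : Fin m → Bool) :
      ∑ b, tieBreak m h (Fin.append a b) =
        2 ^ r * if ∑ l, chi (a l) = 0 then 0 else sgn (∑ l, chi (a l)) := by
    simp only [tieBreak_append]
    split_ifs
    · rw [hh, mul_zero]
    · simp
  rw [fourierCoeff_singleton, sum_univ_append]
  simp only [Fin.append_left, ← sum_mul, hinner, mul_assoc, ← mul_sum, pow_add]
  field_simp

lemma tieBreak_Maj_eq_sgn {k : ℕ} {w : ℝ} (hw : r < 2 * w) :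
    tieBreak (2 * k) (Maj r) = fun x => sgn
      (w * ∑ i : Fin (2 * k), chi (x (Fin.castAdd r i)) + ∑ j, chi (x (Fin.natAdd (2 * k) j))) := by
  funext x
  have hw0 : 0 < w := by linarith [r.cast_nonneg (α := ℝ)]
  rw [tieBreak]
  split_ifs with htie
  · rw [htie, mul_zero, zero_add, Maj]
  · rw [sgn_add_of_abs_lt_abs, sgn_mul_of_pos hw0]
    calc |∑ j, chi (x (Fin.natAdd (2 * k) j))| ≤ r := abs_sum_chi_le fun j => x (Fin.natAdd _ j)
      _ < w * 2 := by linarith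
      _ ≤ w * |∑ i, chi (x (Fin.castAdd r i))| := by gcongr; exact two_le_abs_sum_chi htie
      _ = |w * ∑ i, chi (x (Fin.castAdd r i))| := by rw [abs_mul, abs_of_pos hw0]

lemma Maj_eq_tieBreak (k : ℕ) : Maj (2 * k + 1) = tieBreak (2 * k) (Maj 1) := by
  rw [tieBreak_Maj_eq_sgn (w := 1) (by norm_num)]
  funext x
  rw [Maj, Fin.sum_univ_add, one_mul]

lemma gfun_eq_tieBreak (k : ℕ) : gfun (2 * k + 3) = tieBreak (2 * k) (Maj 3) := by
  rw [tieBreak_Maj_eq_sgn (w := 2) (by norm_num)]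
  funext x
  simp [gfun, Fin.sum_univ_add, mul_sum]

lemma fourierCoeff_tieBreak_two_mul_castAdd {k : ℕ} (hh : ∑ b, h b = 0) (i : Fin (2 * k)) :
    fourierCoeff (tieBreak (2 * k) h) {Fin.castAdd r i} = tieProb (2 * k) := calc
  fourierCoeff (tieBreak (2 * k) h) {Fin.castAdd r i}
    = fourierCoeff (tieBreak (2 * k) (Maj 1)) {Fin.castAdd 1 i} := by
      rw [fourierCoeff_tieBreak_castAdd hh,
        fourierCoeff_tieBreak_castAdd (sum_Maj_eq_zero odd_one)]
  _ = fourierCoeff (tieBreak (2 * k) (Maj 1)) {Fin.natAdd (2 * k) 0} := by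
      rw [← Maj_eq_tieBreak, fourierCoeff_Maj_singleton_eq]
  _ = tieProb (2 * k) := by
      rw [fourierCoeff_tieBreak_natAdd, fourierCoeff_Maj_one, mul_one]

lemma fourierWeight_one_tieBreak {k : ℕ} (hh : ∑ b, h b = 0) :
    fourierWeight 1 (tieBreak (2 * k) h) = tieProb (2 * k) ^ 2 * (2 * k + fourierWeight 1 h) := by
  rw [fourierWeight_one, fourierWeight_one, Fin.sum_univ_add]
  simp only [fourierCoeff_tieBreak_two_mul_castAdd hh, fourierCoeff_tieBreak_natAdd, mul_pow,
    ← mul_sum, sum_const, card_fin, nsmul_eq_mul]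
  push_cast
  ring

lemma fourierWeight_one_Maj (k : ℕ) :
    fourierWeight 1 (Maj (2 * k + 1)) = tieProb (2 * k) ^ 2 * (2 * k + 1) := by
  have hone : fourierWeight 1 (Maj 1) = 1 := by simp [fourierWeight_one, fourierCoeff_Maj_one]
  rw [Maj_eq_tieBreak, fourierWeight_one_tieBreak (sum_Maj_eq_zero odd_one), hone]

lemma fourierWeight_one_Maj_three : fourierWeight 1 (Maj 3) = 3 / 4 := by
  have htie : tieProb (2 * 1) = 1 / 2 := by
    rw [tieProb_two_mul, Nat.centralBinom, Nat.choose_one_right]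
    norm_num
  rw [fourierWeight_one_Maj 1, htie]
  norm_num

lemma fourierWeight_one_gfun (k : ℕ) :
    fourierWeight 1 (gfun (2 * k + 3)) = tieProb (2 * k) ^ 2 * (2 * k + 3 / 4) := by
  rw [gfun_eq_tieBreak, fourierWeight_one_tieBreak (sum_Maj_eq_zero (by decide)),
    fourierWeight_one_Maj_three]

end TieBreak

theorem stmt5 (n : ℕ) (hn : Odd n) (h3 : 3 ≤ n) :
    fourierWeight 1 (gfun n) / fourierWeight 1 (Maj n) =
      (((n : ℝ) - 1) / ((n : ℝ) - 2)) ^ 2 * ((4 * (n : ℝ) - 9) / (4 * (n : ℝ))) := by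
  obtain ⟨k, rfl⟩ : ∃ k, n = 2 * k + 3 := by
    obtain ⟨l, rfl⟩ := hn
    exact ⟨l - 1, by omega⟩
  have htie := (tieProb_two_mul_pos k).ne'
  rw [fourierWeight_one_gfun, show 2 * k + 3 = 2 * (k + 1) + 1 by ring, fourierWeight_one_Maj,
    tieProb_two_mul_succ]
  push_cast
  rw [show 2 * ((k : ℝ) + 1) + 1 - 1 = 2 * (k + 1) by ring,
    show 2 * ((k : ℝ) + 1) + 1 - 2 = 2 * k + 1 by ring]
  field_simp
  ring

end BKS
end

section
/- Every linear threshold function f : {-1,1}^3 → {-1,1} satisfies Stab_ρ(f) ≥ Stab_ρ(Maj_3) for all ρ ∈ [0,1]; that is, the 'Majority is Least Stable' conjecture holds for n = 3. -/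
/-!
Let `p = ∑_{S ∈ A} c_S χ_S` be nowhere zero with sign `f`. Since `f` maximises `E[g p]` over all
`±1`-valued `g`, testing against `g = ± χ_S` gives
`max |c_S| ≤ E[f p] = ∑ c_S f̂(S) ≤ max |c_S| * ∑_{S ∈ A} |f̂(S)|`,
so `∑_{S ∈ A} |f̂(S)| ≥ 1`, strictly unless `f = ± χ_S` for some `S ∈ A`.
On three bits the numbers `4 f̂(S)` are integers of the same parity, and for four such integers
`∑ |a_i| > 4` forces `∑ a_i² ≥ 12`. Hence a linear threshold function has weight at least `3/4` on
levels `0` and `1`. Majority has weight exactly `3/4` on level `1` and the rest on level `3`, and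
moving weight to lower levels only increases the noise stability.
-/

open Finset

namespace BKS

/-- The character `χ_S(x) = ∏_{i ∈ S} x_i`, with bits encoded as `±1` through `chi`. -/
def character {n : ℕ} (S : Finset (Fin n)) (x : Fin n → Bool) : ℝ := ∏ i ∈ S, chi (x i)

section Characters

variable {n : ℕ}

theorem chi_eq_one_or_neg_one (b : Bool) : chi b = 1 ∨ chi b = -1 := by
  cases b <;> simp [chi]

theorem character_eq_one_or_neg_one (S : Finset (Fin n)) (x : Fin n → Bool) :
    character S x = 1 ∨ character S x = -1 := by
  refine prod_induction _ (fun r : ℝ ↦ r = 1 ∨ r = -1) ?_ (.inl rfl)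
    fun i _ ↦ chi_eq_one_or_neg_one (x i)
  rintro _ _ (rfl | rfl) (rfl | rfl) <;> norm_num

theorem fourierCoeff_eq_sum_mul_character (f : (Fin n → Bool) → ℝ) (S : Finset (Fin n)) :
    fourierCoeff f S = (1 / 2 ^ n) * ∑ x, f x * character S x :=
  rfl

theorem sum_character_mul_character (S T : Finset (Fin n)) :
    ∑ x, character S x * character T x = if S = T then 2 ^ n else 0 := by
  have sum_bit (i : Fin n) :
      (∑ b, (if i ∈ S then chi b else 1) * (if i ∈ T then chi b else 1))
        = if i ∈ S ↔ i ∈ T then 2 else 0 := by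
    by_cases hS : i ∈ S <;> by_cases hT : i ∈ T <;> norm_num [hS, hT, chi]
  calc ∑ x, character S x * character T x
      = ∑ x : Fin n → Bool,
          ∏ i, (if i ∈ S then chi (x i) else 1) * (if i ∈ T then chi (x i) else 1) := by
        simp only [character, prod_mul_distrib, prod_ite_mem, univ_inter]
    _ = ∏ i, if i ∈ S ↔ i ∈ T then (2 : ℝ) else 0 := by
        simp only [← sum_bit, Fintype.prod_sum]
    _ = if S = T then 2 ^ n else 0 := by
        simp only [prod_ite_zero, mem_univ, true_imp_iff, ← Finset.ext_iff, prod_const, card_univ,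
          Fintype.card_fin]

theorem sum_character_apply_mul_character_apply (x y : Fin n → Bool) :
    ∑ S, character S x * character S y = if x = y then 2 ^ n else 0 := by
  have one_add_chi_mul_chi (i : Fin n) :
      1 + chi (x i) * chi (y i) = if x i = y i then 2 else 0 := by
    cases x i <;> cases y i <;> norm_num [chi]
  calc ∑ S, character S x * character S y
      = ∏ i, (1 + chi (x i) * chi (y i)) := by
        simp only [character, ← prod_mul_distrib, prod_one_add, powerset_univ]
    _ = if x = y then 2 ^ n else 0 := by
        simp only [one_add_chi_mul_chi, prod_ite_zero, mem_univ, true_imp_iff, funext_iff,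
          prod_const, card_univ, Fintype.card_fin]

theorem fourierCoeff_sum_character (A : Finset (Finset (Fin n))) (c : Finset (Fin n) → ℝ)
    (S : Finset (Fin n)) :
    fourierCoeff (fun x ↦ ∑ T ∈ A, c T * character T x) S = if S ∈ A then c S else 0 := by
  calc fourierCoeff (fun x ↦ ∑ T ∈ A, c T * character T x) S
      = (1 / 2 ^ n) * ∑ T ∈ A, c T * ∑ x, character T x * character S x := by
        simp only [fourierCoeff_eq_sum_mul_character, sum_mul, mul_sum, mul_assoc]
        rw [sum_comm]
    _ = if S ∈ A then c S else 0 := by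
        simp only [sum_character_mul_character, mul_ite, mul_zero, sum_ite_eq']
        field_simp

theorem sum_mul_sum_character (f : (Fin n → Bool) → ℝ) (A : Finset (Finset (Fin n)))
    (c : Finset (Fin n) → ℝ) :
    (1 / 2 ^ n) * ∑ x, f x * ∑ S ∈ A, c S * character S x = ∑ S ∈ A, c S * fourierCoeff f S := by
  simp only [fourierCoeff_eq_sum_mul_character, mul_sum]
  rw [sum_comm]
  exact sum_congr rfl fun S _ ↦ sum_congr rfl fun x _ ↦ by ring

theorem sum_fourierCoeff_sq (f : (Fin n → Bool) → ℝ) :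
    ∑ S, fourierCoeff f S ^ 2 = (1 / 2 ^ n) * ∑ x, f x ^ 2 := by
  calc ∑ S, fourierCoeff f S ^ 2
      = (1 / 2 ^ n) ^ 2 * ∑ x, ∑ y, f x * f y * ∑ S, character S x * character S y := by
        simp only [fourierCoeff_eq_sum_mul_character, mul_pow, ← mul_sum]
        congr 1
        simp only [sq, sum_mul_sum]
        simp only [mul_sum]
        rw [sum_comm]
        refine sum_congr rfl fun x _ ↦ ?_
        rw [sum_comm]
        exact sum_congr rfl fun y _ ↦ sum_congr rfl fun S _ ↦ mul_mul_mul_comm _ _ _ _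
    _ = (1 / 2 ^ n) * ∑ x, f x ^ 2 := by
        simp only [sum_character_apply_mul_character_apply, mul_ite, mul_zero, sum_ite_eq, mem_univ,
          if_true, ← sum_mul, ← sq]
        field_simp

end Characters

section Weights

variable {n : ℕ} {f : (Fin n → Bool) → ℝ}

theorem fourierWeight_nonneg (k : ℕ) (f : (Fin n → Bool) → ℝ) : 0 ≤ fourierWeight k f :=
  sum_nonneg fun _ _ ↦ sq_nonneg _

theorem sum_range_fourierWeight (m : ℕ) (f : (Fin n → Bool) → ℝ) :
    ∑ k ∈ range m, fourierWeight k f = ∑ S with #S < m, fourierCoeff f S ^ 2 := by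
  rw [← sum_fiberwise_of_maps_to (g := card) (t := range m) (by simp)]
  refine sum_congr rfl fun k hk ↦ sum_congr ?_ fun _ _ ↦ rfl
  ext S
  have := mem_range.1 hk
  simp only [mem_filter, mem_univ, true_and]
  omega

theorem sum_fourierWeight_eq_one (hf : ∀ x, f x = 1 ∨ f x = -1) :
    ∑ k ∈ range (n + 1), fourierWeight k f = 1 := by
  have card_lt (S : Finset (Fin n)) : #S < n + 1 := Nat.lt_succ_of_le (card_finset_fin_le S)
  have f_sq (x) : f x ^ 2 = 1 := sq_eq_one_iff.2 (hf x)
  simp [sum_range_fourierWeight, card_lt, sum_fourierCoeff_sq, f_sq]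

theorem le_noiseStab {ρ : ℝ} (h0 : 0 ≤ ρ) (h1 : ρ ≤ 1) {d : ℕ} (hd : d ≤ n)
    (hf : ∑ k ∈ range (n + 1), fourierWeight k f = 1) :
    ρ ^ d * ∑ k ∈ range (d + 1), fourierWeight k f
      + ρ ^ n * (1 - ∑ k ∈ range (d + 1), fourierWeight k f) ≤ noiseStab ρ f := by
  have split (g : ℕ → ℝ) := sum_range_add_sum_Ico g (Nat.succ_le_succ hd)
  rw [← hf, ← split (fourierWeight · f), add_sub_cancel_left, noiseStab,
    ← split, mul_sum, mul_sum]
  gcongr ?_ + ?_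
  · refine sum_le_sum fun k hk ↦ mul_le_mul_of_nonneg_right ?_ (fourierWeight_nonneg k f)
    exact pow_le_pow_of_le_one h0 h1 (Nat.lt_succ_iff.1 (mem_range.1 hk))
  · refine sum_le_sum fun k hk ↦ mul_le_mul_of_nonneg_right ?_ (fourierWeight_nonneg k f)
    exact pow_le_pow_of_le_one h0 h1 (Nat.lt_succ_iff.1 (mem_Ico.1 hk).2)

theorem fourierWeight_sum_character_card (a : ℕ → ℝ) (k : ℕ) :
    fourierWeight k (fun x : Fin n → Bool ↦ ∑ S, a #S * character S x) = n.choose k * a k ^ 2 := by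
  simp only [fourierWeight, fourierCoeff_sum_character univ (fun S ↦ a #S), mem_univ, if_true,
    univ_filter_card_eq]
  rw [sum_powersetCard k univ (fun m ↦ a m ^ 2), card_univ, Fintype.card_fin, nsmul_eq_mul]

end Weights

section Threshold

variable {n : ℕ} {f : (Fin n → Bool) → ℝ}

theorem sum_mul_lt_sum_mul_of_ne {α : Type*} [Fintype α] {f g p : α → ℝ}
    (hf : ∀ x, f x = 1 ∨ f x = -1) (hg : ∀ x, g x = 1 ∨ g x = -1) (hfp : ∀ x, 0 < f x * p x)
    (hne : g ≠ f) : ∑ x, g x * p x < ∑ x, f x * p x := by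
  have eq_neg_of_ne {x} (hx : g x ≠ f x) : g x = -f x := by
    rcases hf x with h | h <;> rcases hg x with h' | h' <;> simp_all
  have lt_of_ne {x} (hx : g x ≠ f x) : g x * p x < f x * p x := by
    rw [eq_neg_of_ne hx]
    linarith [hfp x]
  refine sum_lt_sum (fun x _ ↦ ?_) ?_
  · by_cases hx : g x = f x
    · rw [hx]
    · exact (lt_of_ne hx).le
  · obtain ⟨x, hx⟩ := Function.ne_iff.1 hne
    exact ⟨x, mem_univ x, lt_of_ne hx⟩

theorem exists_sign_mul_eq_abs (r : ℝ) : ∃ s : ℝ, (s = 1 ∨ s = -1) ∧ s * r = |r| := by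
  rcases abs_cases r with ⟨h, -⟩ | ⟨h, -⟩
  · exact ⟨1, .inl rfl, by rw [h, one_mul]⟩
  · exact ⟨-1, .inr rfl, by rw [h, neg_one_mul]⟩

theorem abs_fourierCoeff_mul_character {s : ℝ} (hs : s = 1 ∨ s = -1) (S : Finset (Fin n)) :
    |fourierCoeff (fun x ↦ s * character S x) S| = 1 := by
  have h := fourierCoeff_sum_character {S} (fun _ ↦ s) S
  simp only [sum_singleton, mem_singleton, if_true] at h
  rw [h]
  rcases hs with rfl | rfl <;> simp

theorem abs_lt_sum_mul_fourierCoeff {A : Finset (Finset (Fin n))} {c : Finset (Fin n) → ℝ}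
    (hf : ∀ x, f x = 1 ∨ f x = -1) (hfc : ∀ x, 0 < f x * ∑ S ∈ A, c S * character S x)
    {S : Finset (Fin n)} (hS : S ∈ A) (hfS : |fourierCoeff f S| ≠ 1) :
    |c S| < ∑ T ∈ A, c T * fourierCoeff f T := by
  obtain ⟨s, hs, hsc⟩ := exists_sign_mul_eq_abs (c S)
  let g : (Fin n → Bool) → ℝ := fun x ↦ s * character S x
  have hg (x) : g x = 1 ∨ g x = -1 := by
    rcases hs with rfl | rfl <;> rcases character_eq_one_or_neg_one S x with h | h <;> simp [g, h]
  have hgf : g ≠ f := by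
    rintro rfl
    exact hfS (abs_fourierCoeff_mul_character hs S)
  calc |c S| = s * fourierCoeff (fun x ↦ ∑ T ∈ A, c T * character T x) S := by
        rw [fourierCoeff_sum_character, if_pos hS, hsc]
    _ = (1 / 2 ^ n) * ∑ x, g x * ∑ T ∈ A, c T * character T x := by
        simp only [fourierCoeff_eq_sum_mul_character, g]
        rw [mul_left_comm, mul_sum]
        congr 1
        exact sum_congr rfl fun x _ ↦ by ring
    _ < (1 / 2 ^ n) * ∑ x, f x * ∑ T ∈ A, c T * character T x :=
        mul_lt_mul_of_pos_left (sum_mul_lt_sum_mul_of_ne hf hg hfc hgf) (by positivity)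
    _ = ∑ T ∈ A, c T * fourierCoeff f T := sum_mul_sum_character f A c

theorem one_lt_sum_abs_fourierCoeff {A : Finset (Finset (Fin n))} {c : Finset (Fin n) → ℝ}
    (hf : ∀ x, f x = 1 ∨ f x = -1) (hfc : ∀ x, 0 < f x * ∑ S ∈ A, c S * character S x)
    (hA : ∀ S ∈ A, |fourierCoeff f S| ≠ 1) :
    1 < ∑ S ∈ A, |fourierCoeff f S| := by
  have hne : A.Nonempty := by
    by_contra h
    simp [not_nonempty_iff_eq_empty.1 h] at hfc
  obtain ⟨S, hS, hmax⟩ := exists_max_image A (fun S ↦ |c S|) hne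
  have abs_lt_abs_mul : |c S| < |c S| * ∑ T ∈ A, |fourierCoeff f T| :=
    calc |c S| < ∑ T ∈ A, c T * fourierCoeff f T := abs_lt_sum_mul_fourierCoeff hf hfc hS (hA S hS)
      _ ≤ ∑ T ∈ A, |c S| * |fourierCoeff f T| := sum_le_sum fun T hT ↦
          (le_abs_self _).trans <| (abs_mul _ _).trans_le <|
            mul_le_mul_of_nonneg_right (hmax T hT) (abs_nonneg _)
      _ = |c S| * ∑ T ∈ A, |fourierCoeff f T| := (mul_sum _ _ _).symm
  by_contra! h
  exact abs_lt_abs_mul.not_ge (mul_le_of_le_one_right (abs_nonneg _) h)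

theorem sgn_eq_one_or_neg_one (z : ℝ) : sgn z = 1 ∨ sgn z = -1 :=
  ite_eq_or_eq _ _ _

theorem IsLTF.eq_one_or_neg_one (hf : IsLTF f) (x : Fin n → Bool) : f x = 1 ∨ f x = -1 := by
  obtain ⟨w0, w, h⟩ := hf
  exact h x ▸ sgn_eq_one_or_neg_one _

-- Raising `L` slightly removes its zeros without changing any sign, as `sgn 0 = 1`.
theorem exists_forall_sgn_mul_add_pos {α : Type*} [Finite α] (L : α → ℝ) :
    ∃ ε : ℝ, ∀ x, 0 < sgn (L x) * (ε + L x) := by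
  have small : ∀ᶠ ε in nhdsWithin (0 : ℝ) (Set.Ioi 0), ∀ x, L x < 0 → ε < -L x :=
    Filter.eventually_all.2 fun x ↦ Filter.eventually_imp_distrib_left.2 fun hx ↦
      mem_nhdsWithin_of_mem_nhds (Iio_mem_nhds (neg_pos.2 hx))
  obtain ⟨ε, hε, hpos⟩ := (small.and self_mem_nhdsWithin).exists
  refine ⟨ε, fun x ↦ ?_⟩
  have : 0 < ε := hpos
  by_cases hx : 0 ≤ L x
  · rw [sgn, if_pos hx]
    linarith
  · rw [sgn, if_neg hx]
    linarith [hε x (not_le.1 hx)]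

theorem sum_card_lt_two {M : Type*} [AddCommMonoid M] (g : Finset (Fin n) → M) :
    ∑ S with #S < 2, g S = g ∅ + ∑ i, g {i} := by
  have filter_eq : univ.filter (fun S : Finset (Fin n) ↦ #S < 2)
      = cons ∅ (univ.map ⟨singleton, singleton_injective⟩) (by simp) := by
    ext S
    simp [Nat.le_one_iff_eq_zero_or_eq_one, card_eq_one, eq_comm]
  rw [filter_eq, sum_cons, sum_map]
  rfl

theorem IsLTF.exists_strict (hf : IsLTF f) : ∃ c : Finset (Fin n) → ℝ,
    ∀ x, 0 < f x * ∑ S with #S < 2, c S * character S x := by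
  obtain ⟨w0, w, h⟩ := hf
  obtain ⟨ε, hε⟩ := exists_forall_sgn_mul_add_pos fun x : Fin n → Bool ↦ w0 + ∑ i, w i * chi (x i)
  refine ⟨fun S ↦ if S = ∅ then ε + w0 else ∑ i ∈ S, w i, fun x ↦ ?_⟩
  rw [sum_card_lt_two]
  simpa [character, h, add_assoc] using hε x

end Threshold

theorem exists_int_eq_one_sub_two_mul {r : ℝ} (hr : r = 1 ∨ r = -1) : ∃ k : ℤ, r = 1 - 2 * k := by
  rcases hr with rfl | rfl
  · exact ⟨0, by norm_num⟩
  · exact ⟨1, by norm_num⟩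

theorem exists_int_fourierCoeff {n : ℕ} (hn : 2 ≤ n) {f : (Fin n → Bool) → ℝ}
    (hf : ∀ x, f x = 1 ∨ f x = -1) : ∃ a : Finset (Fin n) → ℤ,
      (∀ S, 2 ^ n * fourierCoeff f S = 2 * a S) ∧ ∀ S T, a S ≡ a T [ZMOD 2] := by
  choose m hm using fun x ↦ exists_int_eq_one_sub_two_mul (hf x)
  choose k hk using fun S x ↦
    exists_int_eq_one_sub_two_mul (character_eq_one_or_neg_one (n := n) S x)
  -- Since `4 ∣ 2 ^ n`, all half-sums `a S` have the parity of `∑ x, m x`.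
  let b (S : Finset (Fin n)) : ℤ := (if ∅ = S then 2 ^ (n - 2) else 0) + ∑ x, m x * k S x
  refine ⟨fun S ↦ 2 * b S - ∑ x, m x, fun S ↦ ?_, fun S T ↦ ?_⟩
  · have sum_character : ∑ x, character S x = 4 * if ∅ = S then (2 : ℝ) ^ (n - 2) else 0 := by
      have two_pow : (2 : ℝ) ^ n = 4 * 2 ^ (n - 2) := by
        rw [← pow_sub_mul_pow 2 hn]
        ring
      simpa [character, two_pow] using sum_character_mul_character ∅ S
    have mul_eq (x) : f x * character S x = character S x - 2 * m x + 4 * (m x * k S x) := by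
      rw [hm, hk]
      ring
    calc 2 ^ n * fourierCoeff f S
        = ∑ x, f x * character S x := by
          rw [fourierCoeff_eq_sum_mul_character, ← mul_assoc, mul_one_div_cancel (by positivity),
            one_mul]
      _ = (4 * if ∅ = S then (2 : ℝ) ^ (n - 2) else 0) - 2 * ∑ x, (m x : ℝ)
            + 4 * ∑ x, (m x * k S x : ℝ) := by
          simp only [mul_eq, sum_add_distrib, sum_sub_distrib, ← mul_sum, sum_character]
      _ = 2 * ((2 * b S - ∑ x, m x : ℤ) : ℝ) := by
          simp only [b]
          push_cast
          ring
  · exact Int.modEq_iff_dvd.2 ⟨b T - b S, by ring⟩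

theorem two_mul_abs_le_sq_of_even {z : ℤ} (hz : Even z) : 2 * |z| ≤ z ^ 2 := by
  obtain ⟨k, hk⟩ := even_abs.2 hz
  rw [← sq_abs, sq]
  rcases eq_or_ne |z| 0 with h | h
  · simp [h]
  · have abs_nonneg := abs_nonneg z
    exact mul_le_mul_of_nonneg_right (by omega) abs_nonneg

theorem four_mul_abs_sub_three_le_sq_of_odd {z : ℤ} (hz : Odd z) : 4 * |z| - 3 ≤ z ^ 2 := by
  obtain ⟨k, hk⟩ := odd_abs.2 hz
  rw [← sq_abs]
  suffices 0 ≤ (|z| - 1) * (|z| - 3) by linarith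
  have := abs_nonneg z
  rcases eq_or_ne |z| 1 with h | h
  · simp [h]
  · exact mul_nonneg (by omega) (by omega)

theorem abs_modEq_two (z : ℤ) : |z| ≡ z [ZMOD 2] := by
  rcases abs_choice z with h | h <;> rw [h]
  exact Int.modEq_iff_dvd.2 ⟨z, by ring⟩

theorem twelve_le_sum_sq {ι : Type*} {s : Finset ι} (hs : #s = 4) {a : ι → ℤ}
    (hpar : ∀ i ∈ s, ∀ j ∈ s, a i ≡ a j [ZMOD 2])
    (h : 4 < ∑ i ∈ s, |a i|) : 12 ≤ ∑ i ∈ s, a i ^ 2 := by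
  obtain ⟨i₀, hi₀⟩ : s.Nonempty := card_pos.1 (by omega)
  have six_le : 6 ≤ ∑ i ∈ s, |a i| := by
    have sum_modEq : ∑ i ∈ s, |a i| ≡ ∑ _i ∈ s, a i₀ [ZMOD 2] :=
      Int.ModEq.sum fun i hi ↦ (abs_modEq_two (a i)).trans (hpar i hi i₀ hi₀)
    rw [sum_const, hs, nsmul_eq_mul, Nat.cast_ofNat, Int.ModEq] at sum_modEq
    omega
  rcases Int.even_or_odd (a i₀) with even | odd
  · have even_all {i : ι} (hi : i ∈ s) : Even (a i) := by
      rw [Int.even_iff] at even ⊢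
      exact Eq.trans (hpar i hi i₀ hi₀) even
    calc (12 : ℤ) ≤ 2 * ∑ i ∈ s, |a i| := by linarith
      _ = ∑ i ∈ s, 2 * |a i| := mul_sum _ _ _
      _ ≤ ∑ i ∈ s, a i ^ 2 := sum_le_sum fun i hi ↦ two_mul_abs_le_sq_of_even (even_all hi)
  · have odd_all {i : ι} (hi : i ∈ s) : Odd (a i) := by
      rw [Int.odd_iff] at odd ⊢
      exact Eq.trans (hpar i hi i₀ hi₀) odd
    calc (12 : ℤ) ≤ 4 * ∑ i ∈ s, |a i| - 4 * 3 := by linarith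
      _ = ∑ i ∈ s, (4 * |a i| - 3) := by simp [sum_sub_distrib, mul_sum, hs]
      _ ≤ ∑ i ∈ s, a i ^ 2 :=
          sum_le_sum fun i hi ↦ four_mul_abs_sub_three_le_sq_of_odd (odd_all hi)

theorem IsLTF.three_quarters_le_sum_fourierWeight {f : (Fin 3 → Bool) → ℝ}
    (hf : IsLTF f) : 3 / 4 ≤ ∑ k ∈ range 2, fourierWeight k f := by
  rw [sum_range_fourierWeight]
  by_cases hA : ∀ S ∈ ({S | #S < 2} : Finset (Finset (Fin 3))), |fourierCoeff f S| ≠ 1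
  · obtain ⟨c, hc⟩ := hf.exists_strict
    obtain ⟨a, ha, hpar⟩ := exists_int_fourierCoeff (by norm_num) hf.eq_one_or_neg_one
    have coeff_eq (S) : fourierCoeff f S = a S / 4 := by linarith [ha S]
    have one_lt := one_lt_sum_abs_fourierCoeff hf.eq_one_or_neg_one hc hA
    have four_lt : 4 < ∑ S with #S < 2, |a S| := by
      simp only [coeff_eq, abs_div, Nat.abs_ofNat, ← sum_div,
        one_lt_div₀ (four_pos : (0 : ℝ) < 4)] at one_lt
      exact_mod_cast one_lt
    have twelve_le : (12 : ℝ) ≤ ∑ S with #S < 2, (a S : ℝ) ^ 2 := by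
      exact_mod_cast twelve_le_sum_sq (by decide) (fun S _ T _ ↦ hpar S T) four_lt
    simp only [coeff_eq, div_pow, ← sum_div]
    linarith
  · push Not at hA
    obtain ⟨S, hS, h⟩ := hA
    calc (3 / 4 : ℝ) ≤ fourierCoeff f S ^ 2 := by rw [← sq_abs, h]; norm_num
      _ ≤ _ := single_le_sum (f := fun S ↦ fourierCoeff f S ^ 2) (fun _ _ ↦ sq_nonneg _) hS

theorem maj_three_apply (x : Fin 3 → Bool) :
    Maj 3 x = 1 / 2 * ∑ i, chi (x i) - 1 / 2 * ∏ i, chi (x i) := by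
  rw [Maj, Fin.sum_univ_three, Fin.prod_univ_three]
  cases x 0 <;> cases x 1 <;> cases x 2 <;> norm_num [chi, sgn]

theorem maj_three_eq_sum_character :
    Maj 3 = fun x ↦ ∑ S : Finset (Fin 3),
      ((if #S = 1 then 1 / 2 else 0) - if #S = 3 then 1 / 2 else 0) * character S x := by
  have powersetCard_three : powersetCard 3 (univ : Finset (Fin 3)) = {univ} := by decide
  funext x
  simp only [maj_three_apply, sub_mul, ite_mul, zero_mul, sum_sub_distrib, ← sum_filter,
    univ_filter_card_eq, powersetCard_one, powersetCard_three, sum_map, Function.Embedding.coeFn_mk,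
    sum_singleton, character, prod_singleton, mul_sum]

theorem noiseStab_maj_three (ρ : ℝ) : noiseStab ρ (Maj 3) = ρ * (3 / 4) + ρ ^ 3 * (1 / 4) := by
  rw [maj_three_eq_sum_character, noiseStab]
  simp only [fourierWeight_sum_character_card
    (fun k ↦ (if k = 1 then 1 / 2 else 0) - if k = 3 then 1 / 2 else 0)]
  norm_num [sum_range_succ, Nat.choose]

theorem stmt9 (f : (Fin 3 → Bool) → ℝ) (hf : IsLTF f) :
    ∀ ρ : ℝ, 0 ≤ ρ → ρ ≤ 1 → noiseStab ρ (Maj 3) ≤ noiseStab ρ f := by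
  intro ρ h0 h1
  have weight_ge := hf.three_quarters_le_sum_fourierWeight
  have pow_le : ρ ^ 3 ≤ ρ := pow_le_of_le_one h0 h1 (by norm_num)
  calc noiseStab ρ (Maj 3)
      = ρ * (3 / 4) + ρ ^ 3 * (1 / 4) := noiseStab_maj_three ρ
    _ ≤ ρ ^ 1 * ∑ k ∈ range 2, fourierWeight k f
          + ρ ^ 3 * (1 - ∑ k ∈ range 2, fourierWeight k f) := by
        linarith [mul_nonneg (sub_nonneg.2 pow_le) (sub_nonneg.2 weight_ge)]
    _ ≤ noiseStab ρ f :=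
        le_noiseStab h0 h1 (by norm_num) (sum_fourierWeight_eq_one hf.eq_one_or_neg_one)

end BKS
end
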